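/- arXiv:math/0211063 — 3 statements merged into one kernel-verified Lean document; each statement's English description precedes it below -/
import Mathlib

section
/- Let V be a finite type and let G be a simple graph on V. Work in the multivariate polynomial ring R = ℤ[x_e : e ∈ E(G)] with one indeterminate x_e for each edge e of G. Let Λ(G) be the V×V matrix over R whose off-diagonal entry Λ_{ij} equals −x_{{i,j}} if {i,j} is an edge of G and 0 otherwise, and whose diagonal entry Λ_{ii} equals the sum of x_{{i,k}} over all vertices k adjacent to i. Then for every vertex p, the determinant of the matrix Λ(G)^{(p)} obtained from Λ(G) by deleting the row and column indexed by p equals the sum, over all spanning trees T of G, of the monomial ∏_{e ∈ edges(T)} x_e. -/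
open scoped Classical

/-!
The proof is combinatorial and avoids the Cauchy–Binet formula. Let `y` be a weight on unordered
pairs of vertices, set to zero off the edges of `G`. Row `i` of the reduced Laplacian is
`∑ k, y s(i, k) • (e_i - e_k)`, where `e_p` is read as `0`. Multilinearity of the determinant in the
rows expands it as a sum over all maps `f` from the non-root vertices to `V`, with terms
`(∏ i, y s(i, f i)) * det (1 - A_f)`, where `A_f` is the adjacency matrix of `i ↦ f i` restricted
to non-root vertices.

Call `f` a parent map if some height function strictly decreases along it; equivalently, every
vertex reaches the root `p` by iterating `f`. For a parent map, `1 - A_f` is unitriangular with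
respect to the height, so its determinant is `1` (`det_parentMatrix_of_isParentMap`). Otherwise the
indicator vector of the vertices that never reach `p` is a nonzero kernel vector, so the
determinant is `0` (`det_parentMatrix_of_not_isParentMap`).

Finally, `f ↦ {s(i, f i)}` is a bijection from parent maps to trees on `V`
(`isTree_parentGraph`, `parentGraph_injective`, `exists_parentGraph_eq`): the inverse sends each
vertex of a tree to a neighbour that is closer to `p`. The bijection preserves weights, since
`i ↦ s(i, f i)` is injective for a parent map. Trees not contained in `G` have weight zero.
-/

namespace MatrixTree

variable {V : Type*} {p : V}

/-! ### Parent maps and their determinants -/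

/-- A map from the non-root vertices to all vertices is a parent map (of a tree rooted at `p`) if
some height function strictly decreases along it. -/
def IsParentMap (f : {v : V // v ≠ p} → V) : Prop :=
  ∃ h : V → ℕ, ∀ i, h (f i) < h i

/-- The matrix `1 - A_f`: row `i` is `e_i - e_{f i}`, where `e_p` is read as `0`. -/
noncomputable def parentMatrix (R : Type*) [CommRing R] (f : {v : V // v ≠ p} → V) :
    Matrix {v : V // v ≠ p} {v : V // v ≠ p} R :=
  fun i j => (if (i : V) = j then 1 else 0) - (if f i = j then 1 else 0)

/-- The graph on `V` whose edges join each non-root vertex to its image under `f`. -/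
def parentGraph (f : {v : V // v ≠ p} → V) : SimpleGraph V :=
  SimpleGraph.fromEdgeSet (Set.range fun i : {v : V // v ≠ p} => s((i : V), f i))

theorem det_parentMatrix_of_isParentMap [Fintype V] {R : Type*} [CommRing R]
    {f : {v : V // v ≠ p} → V} (hf : IsParentMap f) : (parentMatrix R f).det = 1 := by
  obtain ⟨h, hh⟩ := hf
  -- A nonzero off-diagonal entry `(i, f i)` goes from larger to smaller height, so the matrix is
  -- block triangular for the heights in reverse order.
  have hT : (parentMatrix R f).BlockTriangular
      (fun i : {v : V // v ≠ p} => OrderDual.toDual (h i)) := by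
    intro i j hij
    have hij : h i < h j := hij
    have h1 : (i : V) ≠ j := fun e => by rw [e] at hij; exact lt_irrefl _ hij
    have h2 : f i ≠ j := fun e => by have := hh i; rw [e] at this; omega
    simp [parentMatrix, h1, h2]
  rw [hT.det]
  refine Finset.prod_eq_one fun a _ => ?_
  have hone : (parentMatrix R f).toSquareBlock
      (fun i : {v : V // v ≠ p} => OrderDual.toDual (h i)) a = 1 := by
    ext ⟨i, hi⟩ ⟨j, hj⟩
    have hij : h i = h j := OrderDual.toDual.injective (hi.trans hj.symm)
    have h2 : f i ≠ j := fun e => by have := hh i; rw [e] at this; omega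
    simp [Matrix.toSquareBlock_def, parentMatrix, h2, Matrix.one_apply, Subtype.ext_iff]
  rw [hone, Matrix.det_one]

theorem det_parentMatrix_of_not_isParentMap [Fintype V] {R : Type*} [CommRing R] [IsDomain R]
    {f : {v : V // v ≠ p} → V} (hf : ¬ IsParentMap f) : (parentMatrix R f).det = 0 := by
  -- `F` extends `f` by fixing the root.
  let F : V → V := fun v => if hv : v ≠ p then f ⟨v, hv⟩ else p
  have hF : ∀ i : {v : V // v ≠ p}, F i = f i := fun i => dif_pos i.2
  have hFp : F p = p := by simp [F]
  let S : V → Prop := fun v => ∃ n, F^[n] v = p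
  have hSp : S p := ⟨0, rfl⟩
  have hS : ∀ i : {v : V // v ≠ p}, S i ↔ S (f i) := by
    intro i
    constructor
    · rintro ⟨n, hn⟩
      refine ⟨n, ?_⟩
      rw [← hF, ← Function.iterate_succ_apply, Function.iterate_succ_apply', hn, hFp]
    · rintro ⟨n, hn⟩
      exact ⟨n + 1, by rw [Function.iterate_succ_apply, hF, hn]⟩
  -- If every vertex reached the root, the number of steps needed would be a height function.
  have hex : ∃ v, ¬ S v := by
    by_contra! hall
    refine hf ⟨fun v => Nat.find (hall v), fun i => ?_⟩
    have hi := Nat.find_spec (hall i)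
    rcases hn : Nat.find (hall i) with _ | m
    · rw [hn] at hi
      exact absurd hi i.2
    · rw [hn, Function.iterate_succ_apply, hF] at hi
      exact (Nat.lt_succ_of_le (Nat.find_min' (hall (f i)) hi)).trans_eq hn.symm
  obtain ⟨v, hv⟩ := hex
  have hvp : v ≠ p := fun e => hv (e ▸ hSp)
  rw [← Matrix.exists_mulVec_eq_zero_iff]
  refine ⟨fun i => if S i then 0 else 1, fun h0 => ?_, ?_⟩
  · simpa [hv] using congrFun h0 ⟨v, hvp⟩
  · ext i
    have h1 : ∑ j : {v : V // v ≠ p}, (if (i : V) = j then (1 : R) else 0) *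
        (if S j then 0 else 1) = if S i then 0 else 1 := by
      rw [Finset.sum_eq_single i]
      · simp
      · intro j _ hj
        rw [if_neg fun e => hj (Subtype.ext e.symm), zero_mul]
      · simp
    have h2 : ∑ j : {v : V // v ≠ p}, (if f i = j then (1 : R) else 0) *
        (if S j then 0 else 1) = if S (f i) then 0 else 1 := by
      by_cases hp : f i = p
      · rw [hp, if_pos hSp]
        exact Finset.sum_eq_zero fun j _ => by rw [if_neg j.2.symm, zero_mul]
      · rw [Finset.sum_eq_single ⟨f i, hp⟩]
        · simp
        · intro j _ hj
          rw [if_neg fun e => hj (Subtype.ext e.symm), zero_mul]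
        · simp
    simp only [Matrix.mulVec, dotProduct, parentMatrix, sub_mul, Finset.sum_sub_distrib, h1, h2,
      hS i, sub_self, Pi.zero_apply]

/-! ### The bijection between parent maps and trees -/

theorem IsParentMap.ne {f : {v : V // v ≠ p} → V} (hf : IsParentMap f) (i : {v : V // v ≠ p}) :
    (i : V) ≠ f i := by
  obtain ⟨h, hh⟩ := hf
  intro e
  have := hh i
  rw [← e] at this
  exact lt_irrefl _ this

theorem IsParentMap.edge_injective {f : {v : V // v ≠ p} → V} (hf : IsParentMap f) :
    Function.Injective fun i : {v : V // v ≠ p} => s((i : V), f i) := by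
  obtain ⟨h, hh⟩ := hf
  intro i j hij
  rcases Sym2.eq_iff.1 hij with ⟨e, -⟩ | ⟨e₁, e₂⟩
  · exact Subtype.ext e
  · have h1 := hh i
    have h2 := hh j
    rw [e₂] at h1
    rw [← e₁] at h2
    omega

theorem IsParentMap.edgeSet_parentGraph {f : {v : V // v ≠ p} → V} (hf : IsParentMap f) :
    (parentGraph f).edgeSet = Set.range fun i : {v : V // v ≠ p} => s((i : V), f i) := by
  rw [parentGraph, SimpleGraph.edgeSet_fromEdgeSet, sdiff_eq_left, Set.disjoint_left]
  rintro _ ⟨i, rfl⟩ hd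
  exact hf.ne i (by simpa using hd)

theorem IsParentMap.adj {f : {v : V // v ≠ p} → V} (hf : IsParentMap f) (i : {v : V // v ≠ p}) :
    (parentGraph f).Adj i (f i) := by
  rw [← SimpleGraph.mem_edgeSet, hf.edgeSet_parentGraph]
  exact ⟨i, rfl⟩

/-- The graph is connected because following `f` leads to the root, and it has one edge for each
non-root vertex. -/
theorem isTree_parentGraph [Fintype V] {f : {v : V // v ≠ p} → V} (hf : IsParentMap f) :
    (parentGraph f).IsTree := by
  rw [SimpleGraph.isTree_iff_connected_and_card]
  constructor
  · rw [SimpleGraph.connected_iff_exists_forall_reachable]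
    refine ⟨p, fun w => ?_⟩
    obtain ⟨h, hh⟩ := id hf
    induction hn : h w using Nat.strong_induction_on generalizing w with
    | _ n ih =>
      by_cases hw : w = p
      · rw [hw]
      · have hlt := hh ⟨w, hw⟩
        exact (ih _ (hn ▸ hlt) _ rfl).trans (hf.adj ⟨w, hw⟩).symm.reachable
  · rw [hf.edgeSet_parentGraph, Nat.card_range_of_injective hf.edge_injective,
      Nat.card_eq_fintype_card, Nat.card_eq_fintype_card, Fintype.card_subtype_compl,
      Fintype.card_subtype_eq]
    have : 0 < Fintype.card V := Fintype.card_pos_iff.2 ⟨p⟩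
    omega

/-- If `f` and `g` have the same edges and differ at `i`, then they also differ at `f i`; following
`f` one would never reach the root. -/
theorem parentGraph_injective {f g : {v : V // v ≠ p} → V} (hf : IsParentMap f)
    (hg : IsParentMap g) (hfg : parentGraph f = parentGraph g) : f = g := by
  have hE : ∀ i : {v : V // v ≠ p}, ∃ j : {v : V // v ≠ p}, s((j : V), g j) = s((i : V), f i) := by
    intro i
    have : s((i : V), f i) ∈ (parentGraph g).edgeSet := by
      rw [← hfg, hf.edgeSet_parentGraph]
      exact ⟨i, rfl⟩
    rwa [hg.edgeSet_parentGraph] at this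
  obtain ⟨h, hh⟩ := hf
  have key : ∀ (n : ℕ) (i : {v : V // v ≠ p}), h i = n → f i = g i := by
    intro n
    induction n using Nat.strong_induction_on with
    | _ n ih =>
      intro i hi
      obtain ⟨j, hj⟩ := hE i
      rcases Sym2.eq_iff.1 hj with ⟨e₁, e₂⟩ | ⟨e₁, e₂⟩
      · rw [← e₂, Subtype.ext e₁]
      · have h1 := hh i
        -- Here `j = f i` is the `f`-parent of `i`, while `i` is the `g`-parent of `j`.
        have h2 := hh j
        rw [← e₁] at h1
        rw [ih (h j) (hi ▸ h1) j rfl, e₂] at h2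
        omega
  exact funext fun i => key _ i rfl

theorem exists_parentGraph_eq [Fintype V] {T : SimpleGraph V} (hT : T.IsTree) (p : V) :
    ∃ f : {v : V // v ≠ p} → V, IsParentMap f ∧ parentGraph f = T := by
  have hstep : ∀ i : {v : V // v ≠ p}, ∃ k, T.Adj i k ∧ T.dist k p < T.dist i p := by
    rintro ⟨v, hv⟩
    obtain ⟨w, hw⟩ := hT.connected.exists_walk_length_eq_dist v p
    cases w with
    | nil => exact absurd rfl hv
    | cons hadj q =>
      refine ⟨_, hadj, ?_⟩
      change _ < T.dist v p
      rw [← hw, SimpleGraph.Walk.length_cons]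
      exact Nat.lt_succ_of_le (SimpleGraph.dist_le q)
  choose f hadj hlt using hstep
  have hf : IsParentMap f := ⟨fun v => T.dist v p, hlt⟩
  refine ⟨f, hf, ?_⟩
  have hle : parentGraph f ≤ T := by
    rw [← SimpleGraph.edgeSet_subset_edgeSet, hf.edgeSet_parentGraph]
    rintro _ ⟨i, rfl⟩
    exact hadj i
  -- Trees are the minimal connected graphs, so an inclusion of trees is an equality.
  exact le_antisymm hle
    ((SimpleGraph.isTree_iff_minimal_connected.1 hT).2 (isTree_parentGraph hf).connected hle)

theorem sum_isParentMap [Fintype V] {R : Type*} [CommRing R] (y : Sym2 V → R) (p : V) :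
    ∑ f : {v : V // v ≠ p} → V with IsParentMap f, ∏ i : {v : V // v ≠ p}, y s((i : V), f i) =
      ∑ T : SimpleGraph V with T.IsTree, ∏ e ∈ T.edgeFinset, y e := by
  refine Finset.sum_bij (fun f _ => parentGraph f) ?_ ?_ ?_ ?_
  · intro f hf
    exact Finset.mem_filter.2 ⟨Finset.mem_univ _, isTree_parentGraph (Finset.mem_filter.1 hf).2⟩
  · intro f hf g hg hfg
    exact parentGraph_injective (Finset.mem_filter.1 hf).2 (Finset.mem_filter.1 hg).2 hfg
  · intro T hT
    obtain ⟨f, hf, e⟩ := exists_parentGraph_eq (Finset.mem_filter.1 hT).2 p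
    exact ⟨f, Finset.mem_filter.2 ⟨Finset.mem_univ _, hf⟩, e⟩
  · intro f hf
    have hf := (Finset.mem_filter.1 hf).2
    have himg : (parentGraph f).edgeFinset =
        Finset.univ.image fun i : {v : V // v ≠ p} => s((i : V), f i) := by
      ext e
      rw [SimpleGraph.mem_edgeFinset, hf.edgeSet_parentGraph]
      simp
    rw [himg, Finset.prod_image hf.edge_injective.injOn]

/-! ### Expansion of the determinant -/

/-- The Matrix-Tree Theorem for the complete graph with arbitrary edge weights in a domain. -/
theorem det_eq_sum_isTree [Fintype V] {R : Type*} [CommRing R] [IsDomain R]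
    (y : Sym2 V → R) (p : V) :
    Matrix.det (fun i j : {v : V // v ≠ p} =>
      ∑ k : V, y s((i : V), k) *
        ((if (i : V) = j then 1 else 0) - (if k = (j : V) then 1 else 0))) =
      ∑ T : SimpleGraph V with T.IsTree, ∏ e ∈ T.edgeFinset, y e := by
  have hexp := (Matrix.detRowAlternating (n := {v : V // v ≠ p}) (R := R)).toMultilinearMap.map_sum
    (fun (i : {v : V // v ≠ p}) (k : V) (j : {v : V // v ≠ p}) => y s((i : V), k) *
        ((if (i : V) = j then 1 else 0) - (if k = (j : V) then 1 else 0)))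
  have hrow : (fun i j : {v : V // v ≠ p} =>
      ∑ k : V, y s((i : V), k) *
        ((if (i : V) = j then (1 : R) else 0) - (if k = (j : V) then 1 else 0))) =
      fun i : {v : V // v ≠ p} => ∑ k : V, fun j : {v : V // v ≠ p} => y s((i : V), k) *
        ((if (i : V) = j then 1 else 0) - (if k = (j : V) then 1 else 0)) := by
    ext i j
    rw [Finset.sum_apply]
  rw [hrow, ← sum_isParentMap y p, Finset.sum_filter]
  refine hexp.trans (Finset.sum_congr rfl fun f _ => ?_)
  refine (Matrix.det_mul_column (fun i : {v : V // v ≠ p} => y s((i : V), f i))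
    (parentMatrix R f)).trans ?_
  split_ifs with hf
  · rw [det_parentMatrix_of_isParentMap hf, mul_one]
  · rw [det_parentMatrix_of_not_isParentMap hf, mul_zero]

/-! ### Specialization to the edge indeterminates of a graph -/

/-- The indeterminate of an edge of `G`, extended by zero to all unordered pairs. -/
noncomputable def edgeWeight (G : SimpleGraph V) (e : Sym2 V) : MvPolynomial G.edgeSet ℤ :=
  if h : e ∈ G.edgeSet then MvPolynomial.X ⟨e, h⟩ else 0

theorem edgeWeight_coe (G : SimpleGraph V) (e : G.edgeSet) :
    edgeWeight G (e : Sym2 V) = MvPolynomial.X e := dif_pos e.2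

theorem prod_edgeWeight_of_le [Fintype V] {G T : SimpleGraph V} (hT : T ≤ G) :
    ∏ e ∈ T.edgeFinset, edgeWeight G e =
      ∏ e : G.edgeSet, if (e : Sym2 V) ∈ T.edgeSet
        then (MvPolynomial.X e : MvPolynomial G.edgeSet ℤ) else 1 := by
  have hsub : T.edgeFinset ⊆ G.edgeFinset := by simpa using hT
  have h1 : ∏ e ∈ T.edgeFinset, edgeWeight G e =
      ∏ e ∈ G.edgeFinset, if e ∈ T.edgeSet then edgeWeight G e else 1 := by
    rw [← Finset.prod_filter]
    refine Finset.prod_congr ?_ fun _ _ => rfl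
    ext e
    simp only [SimpleGraph.mem_edgeFinset, Finset.mem_filter]
    exact ⟨fun h => ⟨SimpleGraph.edgeSet_mono hT h, h⟩, fun h => h.2⟩
  rw [h1, Finset.prod_subtype G.edgeFinset (p := fun e => e ∈ G.edgeSet)
    (fun _ => SimpleGraph.mem_edgeFinset)]
  exact Finset.prod_congr rfl fun e _ => by rw [← edgeWeight_coe]

theorem prod_edgeWeight_of_not_le [Fintype V] {G T : SimpleGraph V} (hT : ¬ T ≤ G) :
    ∏ e ∈ T.edgeFinset, edgeWeight G e = 0 := by
  rw [← SimpleGraph.edgeSet_subset_edgeSet, Set.not_subset] at hT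
  obtain ⟨e, heT, heG⟩ := hT
  exact Finset.prod_eq_zero (SimpleGraph.mem_edgeFinset.2 heT) (dif_neg heG)

/-- A sum over the edges incident to `v`, reindexed by the other endpoint. -/
theorem sum_incident [Fintype V] (G : SimpleGraph V) (v : V) :
    ∑ e : G.edgeSet, (if v ∈ (e : Sym2 V) then
      (MvPolynomial.X e : MvPolynomial G.edgeSet ℤ) else 0) =
      ∑ k : V, edgeWeight G s(v, k) := by
  have h1 : ∑ e : G.edgeSet, (if v ∈ (e : Sym2 V) then
      (MvPolynomial.X e : MvPolynomial G.edgeSet ℤ) else 0) =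
      ∑ e ∈ G.edgeFinset, if v ∈ e then edgeWeight G e else 0 := by
    rw [Finset.sum_subtype G.edgeFinset (p := fun e => e ∈ G.edgeSet)
      (fun _ => SimpleGraph.mem_edgeFinset)]
    exact Finset.sum_congr rfl fun e _ => by rw [← edgeWeight_coe]
  have hinj : Function.Injective fun k : V => s(v, k) := fun a b h => Sym2.congr_right.1 h
  rw [h1, ← Finset.sum_filter, ← Finset.sum_image (s := Finset.univ) (g := fun k : V => s(v, k))
    (f := edgeWeight G) hinj.injOn]
  refine Finset.sum_subset ?_ ?_
  · intro e he
    obtain ⟨k, rfl⟩ := Sym2.mem_iff_exists.1 (Finset.mem_filter.1 he).2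
    simp
  · intro e he hne
    obtain ⟨k, -, rfl⟩ := Finset.mem_image.1 he
    refine dif_neg fun h => hne ?_
    exact Finset.mem_filter.2 ⟨SimpleGraph.mem_edgeFinset.2 h, Sym2.mem_mk_left _ _⟩

theorem sum_eq_edge [Fintype V] (G : SimpleGraph V) (a : Sym2 V) :
    ∑ e : G.edgeSet, (if (e : Sym2 V) = a then
      -(MvPolynomial.X e : MvPolynomial G.edgeSet ℤ) else 0) = -edgeWeight G a := by
  by_cases ha : a ∈ G.edgeSet
  · rw [Finset.sum_eq_single ⟨a, ha⟩]
    · simp [edgeWeight, ha]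
    · intro e _ he
      exact if_neg fun h => he (Subtype.ext h)
    · simp
  · rw [edgeWeight, dif_neg ha, neg_zero]
    exact Finset.sum_eq_zero fun e _ => if_neg fun h : (e : Sym2 V) = a => ha (h ▸ e.2)

end MatrixTree

/-- the weighted Matrix-Tree Theorem.  Work in the polynomial ring
`R = ℤ[x_e : e ∈ E(G)]`.  The matrix `Λ(G)` has `(i,j)` entry `-x_{{i,j}}` if
`{i,j}` is an edge of `G` (and `0` otherwise) for `i ≠ j`, and `(i,i)` entry the
sum of `x_{{i,k}}` over all vertices `k` adjacent to `i` (equivalently, the sum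
of `x_e` over all edges `e` incident to `i`).  Deleting the row and column of
any vertex `p`, the determinant equals the generating function of spanning
trees of `G`: the sum over all spanning trees `T` of `G` (spanning subgraphs
`T ≤ G` that are trees) of `∏_{e ∈ edges(T)} x_e`. -/
theorem matrix_tree_theorem_weighted {V : Type*} [Fintype V]
    (G : SimpleGraph V) (p : V) :
    (Matrix.det (fun i j : {v : V // v ≠ p} =>
      if (i : V) = (j : V) then
        ∑ e : G.edgeSet, if (i : V) ∈ (e : Sym2 V)
          then (MvPolynomial.X e : MvPolynomial G.edgeSet ℤ) else 0
      else
        ∑ e : G.edgeSet, if (e : Sym2 V) = s((i : V), (j : V))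
          then -(MvPolynomial.X e : MvPolynomial G.edgeSet ℤ) else 0))
    = ∑ T ∈ Finset.univ.filter (fun T : SimpleGraph V => T ≤ G ∧ T.IsTree),
        ∏ e : G.edgeSet, if (e : Sym2 V) ∈ T.edgeSet
          then (MvPolynomial.X e : MvPolynomial G.edgeSet ℤ) else 1 := by
  have hM : (fun i j : {v : V // v ≠ p} =>
      if (i : V) = (j : V) then
        ∑ e : G.edgeSet, if (i : V) ∈ (e : Sym2 V)
          then (MvPolynomial.X e : MvPolynomial G.edgeSet ℤ) else 0
      else
        ∑ e : G.edgeSet, if (e : Sym2 V) = s((i : V), (j : V))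
          then -(MvPolynomial.X e : MvPolynomial G.edgeSet ℤ) else 0) =
      fun i j : {v : V // v ≠ p} => ∑ k : V, MatrixTree.edgeWeight G s((i : V), k) *
        ((if (i : V) = j then 1 else 0) - (if k = (j : V) then 1 else 0)) := by
    funext i j
    simp only [MatrixTree.sum_incident, MatrixTree.sum_eq_edge, mul_sub, Finset.sum_sub_distrib,
      mul_ite, mul_one, mul_zero, Finset.sum_ite_eq', Finset.mem_univ, if_true]
    split_ifs with h
    -- On the diagonal, the extra term `k = i` has weight zero since `G` has no loops.
    · have h0 : MatrixTree.edgeWeight G s((i : V), (j : V)) = 0 := dif_neg (by simp [h])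
      rw [h0, sub_zero]
    · simp
  rw [hM, MatrixTree.det_eq_sum_isTree, Finset.sum_filter, Finset.sum_filter]
  refine Finset.sum_congr rfl fun T _ => ?_
  by_cases hT : T ≤ G
  · simp only [hT, true_and, MatrixTree.prod_edgeWeight_of_le hT]
  · simp only [hT, false_and, if_false, MatrixTree.prod_edgeWeight_of_not_le hT, ite_self]
end

section
/- Let R be a commutative ring and let A be an n×n matrix over R (n ≥ 1) such that every row of A sums to zero and every column of A sums to zero. Then for any two indices p and q, det A^{(p)} = det A^{(q)}, where A^{(p)} denotes the matrix obtained from A by deleting the p-th row and p-th column. In particular, this applies both to symmetric matrices with zero row sums and to skew-symmetric matrices with zero row sums. -/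
/-!
Passing from `A⁽ᵖ⁾` to `A⁽ᑫ⁾` changes the deleted row and then the deleted column. As the columns
of `A` sum to zero, exchanging the deleted row `p` for `q` multiplies the minor by `(-1) ^ (p - q)`
(`Matrix.submatrix_succAbove_det_eq_negOnePow_submatrix_succAbove_det`); as the rows sum to zero,
exchanging the deleted column contributes the same sign, and the two signs cancel.
-/

/-- If every row and every column of a square matrix `A`
(of size `n ≥ 1`) over a commutative ring sums to zero, then the determinant
of the matrix obtained by deleting the `p`-th row and `p`-th column does not
depend on `p`. -/
theorem det_submatrix_independent_of_deleted_index
    {R : Type*} [CommRing R] {n : ℕ}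
    (A : Matrix (Fin (n + 1)) (Fin (n + 1)) R)
    (hrow : ∀ i, ∑ j, A i j = 0)
    (hcol : ∀ j, ∑ i, A i j = 0)
    (p q : Fin (n + 1)) :
    (A.submatrix p.succAbove p.succAbove).det
      = (A.submatrix q.succAbove q.succAbove).det := by
  have hr := (A.submatrix id p.succAbove).submatrix_succAbove_det_eq_negOnePow_submatrix_succAbove_det
    (funext fun j => (Finset.sum_apply _ _ _).trans (hcol (p.succAbove j))) p q
  have hc := (A.submatrix q.succAbove id).submatrix_succAbove_det_eq_negOnePow_submatrix_succAbove_det'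
    (fun i => hrow (q.succAbove i)) p q
  simp only [Matrix.submatrix_submatrix, Function.id_comp, Function.comp_id] at hr hc
  rw [hr, hc, smul_smul, Int.units_mul_self, one_smul]
end

section
/- Fix m ≥ 1 and work in the multivariate polynomial ring R = ℤ[y_{ijk} : 1 ≤ i < j < k ≤ m]. For an arbitrary triple (i,j,k) of indices in {1,…,m}, define ỹ_{ijk} ∈ R to be 0 if two of i,j,k coincide, and sgn(σ)·y_{i'j'k'} if (i,j,k) is obtained from the increasing triple (i',j',k') by the permutation σ (so ỹ is antisymmetric in its three indices). Let Λ(Γ_m) be the m×m skew-symmetric matrix over R with (i,j) entry Σ_{k=1}^{m} ỹ_{ijk}. Then there exists a function ε assigning to each spanning tree T of the complete 3-graph Γ_m a sign ε(T) ∈ {1, −1}, such that for every p ∈ {1,…,m}: det(Λ(Γ_m)^{(p)}) = ( Σ_T ε(T) · ∏_{{i,j,k} ∈ T, i<j<k} y_{ijk} )², where the sum runs over all spanning trees T of Γ_m. -/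
/-!
Write `Λ = ∑_{a<b<c} y_{abc} (e_b - e_a) ∧ (e_c - e_a)`, identifying alternating matrices with
bivectors (`laplacian_eq`).  Let `m = 2 n + 1`; for even `m` both sides vanish.

*Pfaffians.*  For bivectors `u_s ∧ v_s` in dimension `2 n`, expanding the product of entries in
`rawPf A = ∑_σ sgn σ ∏_k A (σ (0,k)) (σ (1,k))` gives, for `A = ∑ y_s u_s ∧ v_s`,
`rawPf A = 2 ^ n * n! * ∑_{|T| = n} y_T det [u_s, v_s]_{s ∈ T}`
(`rawPf_bivector`, `sum_functions_eq_factorial_mul`).  The left side depends on `A` only, so another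
decomposition of `A` may be used to compute it.  Over a field `A` is a sum of `n` bivectors
(`exists_bivectors`), that is `A = C J Cᵀ`, and then `rawPf A = 2 ^ n * n! * det C`; thus
`rawPf A ^ 2 = (2 ^ n * n!) ^ 2 * det A` (`rawPf_sq`).  Comparing the two evaluations gives
`det_bivector_eq_sq`.

*Trees.*  For `Λ` with the root row and column removed, `det [u_s, v_s]_{s ∈ T}` is the determinant
of the reduced incidence matrix of the graph with edges `ab`, `ac` for `abc ∈ T`.  If the
realization of `T` is connected then the columns span the integer lattice, so the determinant is
`±1` (`isUnit_incMatrix_det`); otherwise the indicator of a component avoiding the root is a left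
null vector and the determinant is `0` (`incMatrix_det_eq_zero`).  By counting edges, a connected
realization with `|T| = n` is a tree, and a tree has `|T| = n` (`realization_isTree_iff`).

*Independence of the root.*  Moving the root multiplies the reduced incidence matrices of all `T`
by one and the same matrix (`treeSign_change_root`), whose determinant is `±1` as soon as a spanning
tree exists.  The global sign disappears on squaring, so the signs may be read off at any one root.
-/

open scoped Classical

/-- The realization of a finite set `T` of (3-element) subsets of `V`: the
simple graph on the disjoint union `V ⊕ T` in which each `t ∈ T` is adjacent
exactly to the elements of `t`, and there are no other adjacencies. -/
def realization {V : Type*} (T : Finset (Finset V)) :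
    SimpleGraph (V ⊕ {t // t ∈ T}) :=
  SimpleGraph.fromRel (fun x y =>
    match x, y with
    | Sum.inl v, Sum.inr t => v ∈ t.1
    | _, _ => False)

/-- The antisymmetrized variable `ỹ_{ijk}` in the polynomial ring
`R = ℤ[y_s : s a 3-element subset of {1,…,m}]`: it is `0` if two of the three
indices coincide, and `sgn(σ) · y_{{i,j,k}}` otherwise, where `σ` is the
permutation taking the increasing ordering of `{i,j,k}` to `(i,j,k)`.
(For distinct indices, `sgn(σ)` equals the sign of `(j-i)(k-j)(k-i)`.) -/
noncomputable def ytilde (m : ℕ) (i j k : Fin m) :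
    MvPolynomial {s : Finset (Fin m) // s.card = 3} ℤ :=
  (((j : ℤ) - (i : ℤ)) * ((k : ℤ) - (j : ℤ)) * ((k : ℤ) - (i : ℤ))).sign •
    (if h : ({i, j, k} : Finset (Fin m)).card = 3
      then MvPolynomial.X ⟨({i, j, k} : Finset (Fin m)), h⟩ else 0)

/-! ### Pfaffians -/

/-- The square matrix whose columns, in pairs indexed by `k : Fin n`, are the vectors
`p (f k)` (at column `(0, k)`) and `q (f k)` (at column `(1, k)`). -/
def pairMatrix {R κ : Type*} {n : ℕ} (p q : κ → Fin 2 × Fin n → R) (f : Fin n → κ) :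
    Matrix (Fin 2 × Fin n) (Fin 2 × Fin n) R :=
  Matrix.of fun i x => if x.1 = 0 then p (f x.2) i else q (f x.2) i

/-- The unnormalised Pfaffian `∑_σ sgn σ ∏_k A (σ (0,k)) (σ (1,k))` of a matrix with rows and
columns indexed by `Fin 2 × Fin n`.  For an alternating `A` it is `2 ^ n * n!` times the usual
Pfaffian. -/
def rawPf {R : Type*} [CommRing R] {n : ℕ} (A : Fin 2 × Fin n → Fin 2 × Fin n → R) : R :=
  ∑ σ : Equiv.Perm (Fin 2 × Fin n), ((Equiv.Perm.sign σ : ℤ) : R) *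
    ∏ k : Fin n, A (σ (0, k)) (σ (1, k))

/-- Expansion of the raw Pfaffian of a sum of rank-one matrices. -/
lemma rawPf_sum {R κ : Type*} [CommRing R] [Fintype κ] {n : ℕ} (y : κ → R)
    (p q : κ → Fin 2 × Fin n → R) :
    rawPf (fun i j => ∑ s, y s * (p s i * q s j)) =
      ∑ f : Fin n → κ, (∏ k, y (f k)) * (pairMatrix p q f).det := by
  unfold rawPf
  simp_rw [Fintype.prod_sum, Finset.mul_sum]
  rw [Finset.sum_comm]
  refine Finset.sum_congr rfl fun f _ => ?_
  rw [Matrix.det_apply', Finset.mul_sum]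
  refine Finset.sum_congr rfl fun σ _ => ?_
  rw [Fintype.prod_prod_type, Fin.prod_univ_two]
  simp only [pairMatrix, Matrix.of_apply, Finset.prod_mul_distrib]
  simp
  ring

lemma pairMatrix_det_comp_perm {R κ : Type*} [CommRing R] {n : ℕ}
    (p q : κ → Fin 2 × Fin n → R) (f : Fin n → κ) (σ : Equiv.Perm (Fin n)) :
    (pairMatrix p q (f ∘ σ)).det = (pairMatrix p q f).det := by
  have h : pairMatrix p q (f ∘ σ) =
      (pairMatrix p q f).submatrix id (Equiv.prodCongrRight fun _ : Fin 2 => σ) := by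
    ext i x
    simp [pairMatrix]
  rw [h, Matrix.det_permute', Equiv.Perm.sign_prodCongrRight]
  -- each pair of columns moves as a block, so the sign of `σ` enters squared
  rcases Int.units_eq_one_or (Equiv.Perm.sign σ) with h | h <;> simp [h]

lemma pairMatrix_det_of_not_injective {R κ : Type*} [CommRing R] {n : ℕ}
    (p q : κ → Fin 2 × Fin n → R) (f : Fin n → κ) (hf : ¬ Function.Injective f) :
    (pairMatrix p q f).det = 0 := by
  simp only [Function.Injective, not_forall] at hf
  obtain ⟨a, b, hab, hne⟩ := hf
  refine Matrix.det_zero_of_column_eq (i := (0, a)) (j := (0, b)) (by simpa using hne) ?_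
  intro i
  simp [pairMatrix, hab]

/-- Two enumerations of the same finite set give the same determinant. -/
lemma pairMatrix_det_congr {R κ : Type*} [CommRing R] {n : ℕ}
    (p q : κ → Fin 2 × Fin n → R) {f g : Fin n → κ} (hf : Function.Injective f)
    (hg : Function.Injective g) (h : Set.range f = Set.range g) :
    (pairMatrix p q f).det = (pairMatrix p q g).det := by
  have key : f = g ∘ ((Equiv.ofInjective f hf).trans
      ((Equiv.setCongr h).trans (Equiv.ofInjective g hg).symm)) := by
    funext k
    have := Equiv.apply_ofInjective_symm hg ((Equiv.setCongr h) (Equiv.ofInjective f hf k))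
    simpa using this.symm
  rw [key, pairMatrix_det_comp_perm]

/-- Replacing some of the pairs `(u, v)` by `(-v, u)`, as prescribed by the Boolean components,
multiplies the matrix by a block diagonal matrix of determinant one. -/
lemma pairMatrix_det_rotate {R ι : Type*} [CommRing R] {n : ℕ}
    (u v : ι → Fin 2 × Fin n → R) (h : Fin n → ι × Bool) :
    (pairMatrix (fun s : ι × Bool => if s.2 then -v s.1 else u s.1)
      (fun s : ι × Bool => if s.2 then u s.1 else v s.1) h).det =
      (pairMatrix u v (fun k => (h k).1)).det := by
  have key : pairMatrix (fun s : ι × Bool => if s.2 then -v s.1 else u s.1)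
      (fun s : ι × Bool => if s.2 then u s.1 else v s.1) h =
      pairMatrix u v (fun k => (h k).1) *
        Matrix.blockDiagonal fun k => if (h k).2 then !![0, 1; -1, 0] else 1 := by
    ext i ⟨a, k⟩
    rw [Matrix.mul_apply, Fintype.sum_prod_type]
    simp only [Fin.sum_univ_two, Matrix.blockDiagonal_apply, pairMatrix, Matrix.of_apply]
    simp only [mul_ite, mul_zero, Finset.sum_ite_eq', Finset.mem_univ, if_true]
    cases (h k).2 <;> fin_cases a <;> simp [Matrix.one_apply]
  rw [key, Matrix.det_mul, Matrix.det_blockDiagonal, Finset.prod_eq_one, mul_one]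
  intro k _
  split_ifs <;> simp

/-- The raw Pfaffian of a combination of bivectors `u s ∧ v s`. -/
lemma rawPf_bivector {R ι : Type*} [CommRing R] [Fintype ι] {n : ℕ} (y : ι → R)
    (u v : ι → Fin 2 × Fin n → R) :
    rawPf (fun i j => ∑ s, y s * (u s i * v s j - v s i * u s j)) =
      2 ^ n * ∑ f : Fin n → ι, (∏ k, y (f k)) * (pairMatrix u v f).det := by
  have h1 : (fun i j => ∑ s, y s * (u s i * v s j - v s i * u s j)) =
      fun i j => ∑ s : ι × Bool, y s.1 * ((if s.2 then -v s.1 else u s.1) i *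
        (if s.2 then u s.1 else v s.1) j) := by
    funext i j
    rw [Fintype.sum_prod_type]
    refine Finset.sum_congr rfl fun s _ => ?_
    simp
    ring
  rw [h1, rawPf_sum (fun s : ι × Bool => y s.1)]
  simp_rw [pairMatrix_det_rotate]
  rw [← (Equiv.arrowProdEquivProdArrow (Fin n) (fun _ => ι) (fun _ => Bool)).symm.sum_comp,
    Fintype.sum_prod_type, Finset.mul_sum]
  refine Finset.sum_congr rfl fun f _ => ?_
  simp [Equiv.arrowProdEquivProdArrow]

/-- A sum over functions `Fin n → ι` of a quantity that vanishes on non-injective functions and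
otherwise depends only on the image is `n!` times a sum over `n`-element subsets. -/
lemma sum_functions_eq_factorial_mul {R ι : Type*} [CommRing R] [Fintype ι] {n : ℕ}
    (G : (Fin n → ι) → R) (H : Finset ι → R)
    (h0 : ∀ f, ¬ Function.Injective f → G f = 0)
    (h1 : ∀ f, Function.Injective f → G f = H (Finset.univ.image f)) :
    ∑ f, G f = (n.factorial : R) * ∑ T ∈ Finset.univ.powersetCard n, H T := by
  have hmaps : ∀ f ∈ Finset.univ.filter (fun f : Fin n → ι => Function.Injective f),
      Finset.univ.image f ∈ (Finset.univ : Finset ι).powersetCard n := by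
    intro f hf
    rw [Finset.mem_filter] at hf
    rw [Finset.mem_powersetCard_univ, Finset.card_image_of_injective _ hf.2]
    simp
  rw [← Finset.sum_filter_of_ne (p := fun f : Fin n → ι => Function.Injective f)
    (fun f _ hf => by_contra fun h => hf (h0 f h)),
    ← Finset.sum_fiberwise_of_maps_to hmaps, Finset.mul_sum]
  refine Finset.sum_congr rfl fun T hT => ?_
  rw [Finset.mem_powersetCard_univ] at hT
  rw [Finset.sum_congr rfl (g := fun _ => H T)]
  · rw [Finset.sum_const, nsmul_eq_mul]
    congr 2
    -- the enumerations of `T` are the bijections from `Fin n` onto `T`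
    have e : {f // f ∈ (Finset.univ.filter (fun f : Fin n → ι => Function.Injective f)).filter
        (fun f => Finset.univ.image f = T)} ≃ (Fin n ≃ T) :=
      { toFun := fun f => Equiv.ofBijective
          (fun k => ⟨f.1 k, by
            exact (Finset.ext_iff.1 (Finset.mem_filter.1 f.2).2 _).1
              (Finset.mem_image_of_mem _ (Finset.mem_univ k))⟩) (by
            have h2 := (Finset.mem_filter.1 (Finset.mem_filter.1 f.2).1).2
            rw [Fintype.bijective_iff_injective_and_card]
            exact ⟨fun a b hab => h2 (by simpa using hab), by simp [hT]⟩)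
        invFun := fun g => ⟨fun k => (g k : ι), by
          rw [Finset.mem_filter, Finset.mem_filter]
          refine ⟨⟨Finset.mem_univ _, fun a b hab => g.injective (Subtype.ext hab)⟩, ?_⟩
          ext x
          simp only [Finset.mem_image, Finset.mem_univ, true_and]
          constructor
          · rintro ⟨k, rfl⟩; exact (g k).2
          · intro hx; exact ⟨g.symm ⟨x, hx⟩, by simp⟩⟩
        left_inv := fun f => by ext; rfl
        right_inv := fun g => by ext; rfl }
    rw [← Fintype.card_coe, Fintype.card_congr e]
    have e0 : Fin n ≃ T := (T.equivFinOfCardEq hT).symm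
    rw [Fintype.card_equiv e0, Fintype.card_fin]
  · intro f hf
    simp only [Finset.mem_filter, Finset.mem_univ, true_and] at hf
    rw [h1 f hf.1, hf.2]

/-- Every alternating matrix supported on at most `2 * r + 1` indices is a sum of `r` bivectors:
two rows at a time can be cleared by subtracting a rank-two alternating matrix. -/
lemma exists_bivectors {K N : Type*} [Field K] (r : ℕ) :
    ∀ (S : Finset N) (A : N → N → K), S.card ≤ 2 * r + 1 → (∀ i, A i i = 0) →
      (∀ i j, A i j = -A j i) → (∀ i j, i ∉ S → A i j = 0) →
      ∃ u v : Fin r → N → K, ∀ i j, A i j = ∑ t, (u t i * v t j - v t i * u t j) := by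
  induction r with
  | zero =>
    intro S A hS h0 hA hsupp
    refine ⟨Fin.elim0, Fin.elim0, fun i j => ?_⟩
    simp only [Finset.univ_eq_empty, Finset.sum_empty]
    by_cases hi : i ∈ S
    · by_cases hj : j ∈ S
      · rw [Finset.card_le_one.1 (by simpa using hS) i hi j hj, h0]
      · rw [hA, hsupp j i hj, neg_zero]
    · exact hsupp i j hi
  | succ r ih =>
    intro S A hS h0 hA hsupp
    by_cases hz : ∀ i j, A i j = 0
    · exact ⟨fun _ _ => 0, fun _ _ => 0, fun i j => by simp [hz]⟩
    push Not at hz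
    obtain ⟨a, b, hab⟩ := hz
    have hne : a ≠ b := by rintro rfl; exact hab (h0 a)
    have ha : a ∈ S := by by_contra h; exact hab (hsupp a b h)
    have hb : b ∈ S := by by_contra h; exact hab (by rw [hA, hsupp b a h, neg_zero])
    have hba : A b a = -A a b := hA b a
    have hcol : ∀ i x, i ∉ S → A x i = 0 := fun i x hi => by rw [hA, hsupp i x hi, neg_zero]
    obtain ⟨u, v, huv⟩ := ih ((S.erase a).erase b)
      (fun i j => A i j - (A a i * ((A a b)⁻¹ * A b j) - (A a b)⁻¹ * A b i * A a j))
      (by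
        rw [Finset.card_erase_of_mem (Finset.mem_erase.2 ⟨hne.symm, hb⟩),
          Finset.card_erase_of_mem ha]
        omega)
      (fun i => by rw [h0]; ring)
      (fun i j => by rw [hA i j]; ring)
      (fun i j hi => by
        simp only [Finset.mem_erase, not_and] at hi
        by_cases hib : i = b
        · subst hib
          rw [h0 i]
          field_simp
          ring
        · by_cases hia : i = a
          · subst hia
            rw [h0 i, hba]
            field_simp
            ring
          · have hi' := hi hib hia
            rw [hsupp i j hi', hcol i a hi', hcol i b hi']
            ring)
    refine ⟨Fin.cons (A a) u, Fin.cons (fun x => (A a b)⁻¹ * A b x) v, fun i j => ?_⟩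
    rw [Fin.sum_univ_succ]
    simp only [Fin.cons_zero, Fin.cons_succ]
    rw [← huv i j]
    ring

/-- The square of the Pfaffian is the determinant, for the raw Pfaffian over a field. -/
lemma rawPf_sq_field {K : Type*} [Field K] {n : ℕ} (A : Fin 2 × Fin n → Fin 2 × Fin n → K)
    (h0 : ∀ i, A i i = 0) (hA : ∀ i j, A i j = -A j i) :
    rawPf A ^ 2 = (2 ^ n * (n.factorial : K)) ^ 2 * (Matrix.of A).det := by
  obtain ⟨u, v, huv⟩ := exists_bivectors n Finset.univ A (by simp) h0 hA (by simp)
  have hpf : rawPf A = 2 ^ n * ((n.factorial : K) * (pairMatrix u v id).det) := by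
    have h1 : A = fun i j => ∑ t, (1 : K) * (u t i * v t j - v t i * u t j) := by
      funext i j
      simp [huv i j]
    rw [h1, rawPf_bivector (fun _ => (1 : K))]
    congr 1
    rw [sum_functions_eq_factorial_mul _ (fun _ => (pairMatrix u v id).det)]
    · have : (Finset.univ : Finset (Fin n)).powersetCard n = {Finset.univ} := by
        simpa using Finset.powersetCard_self (Finset.univ : Finset (Fin n))
      rw [this, Finset.sum_singleton]
    · intro f hf
      rw [pairMatrix_det_of_not_injective _ _ _ hf, mul_zero]
    · intro f hf
      rw [pairMatrix_det_congr u v hf Function.injective_id]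
      · simp
      · rw [(Finite.injective_iff_surjective.1 hf).range_eq]
        simp
  -- `A = C J Cᵀ` with `J` the standard symplectic form
  have hdet : Matrix.of A = pairMatrix u v id *
      Matrix.blockDiagonal (fun _ : Fin n => !![0, 1; -1, 0]) * (pairMatrix u v id).transpose := by
    ext i j
    rw [Matrix.mul_apply, Fintype.sum_prod_type]
    simp only [Matrix.mul_apply, Fintype.sum_prod_type, Fin.sum_univ_two,
      Matrix.blockDiagonal_apply, pairMatrix, Matrix.of_apply, Matrix.transpose_apply]
    simp only [mul_ite, mul_zero, Finset.sum_ite_eq', Finset.mem_univ, if_true]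
    rw [huv i j, ← Finset.sum_add_distrib]
    refine Finset.sum_congr rfl fun t _ => ?_
    simp
    ring
  rw [hpf, hdet, Matrix.det_mul, Matrix.det_mul, Matrix.det_transpose, Matrix.det_blockDiagonal]
  simp
  ring

lemma rawPf_sq {R : Type*} [CommRing R] [IsDomain R] {n : ℕ}
    (A : Fin 2 × Fin n → Fin 2 × Fin n → R)
    (h0 : ∀ i, A i i = 0) (hA : ∀ i j, A i j = -A j i) :
    rawPf A ^ 2 = (2 ^ n * (n.factorial : R)) ^ 2 * (Matrix.of A).det := by
  apply IsFractionRing.injective R (FractionRing R)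
  have h := rawPf_sq_field (fun i j => algebraMap R (FractionRing R) (A i j))
    (fun i => by simp [h0]) (fun i j => by rw [hA i j, map_neg])
  have hd : (Matrix.of fun i j => algebraMap R (FractionRing R) (A i j)).det =
      algebraMap R (FractionRing R) (Matrix.of A).det := by
    rw [RingHom.map_det]; rfl
  rw [hd] at h
  simp only [map_mul, map_pow, map_natCast, map_ofNat]
  rw [← h]
  congr 1
  simp [rawPf]

/-- Cauchy–Binet for Pfaffians, squared: the determinant of `∑ y s • (u s ∧ v s)` is the square of
the sum over `n`-subsets `T` of `y_T` times the determinant of the columns `u s, v s`, `s ∈ T`. -/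
lemma det_bivector_eq_sq {R ι : Type*} [CommRing R] [IsDomain R] [CharZero R] [Fintype ι] {n : ℕ}
    (y : ι → R) (u v : ι → Fin 2 × Fin n → R) (H : Finset ι → R)
    (hH : ∀ f : Fin n → ι, Function.Injective f →
      (pairMatrix u v f).det = H (Finset.univ.image f)) :
    (Matrix.of fun i j => ∑ s, y s * (u s i * v s j - v s i * u s j)).det =
      (∑ T ∈ Finset.univ.powersetCard n, (∏ s ∈ T, y s) * H T) ^ 2 := by
  have h1 := rawPf_sq (fun i j => ∑ s, y s * (u s i * v s j - v s i * u s j))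
    (fun i => Finset.sum_eq_zero fun s _ => by ring)
    (fun i j => by
      rw [← Finset.sum_neg_distrib]
      exact Finset.sum_congr rfl fun s _ => by ring)
  rw [rawPf_bivector, sum_functions_eq_factorial_mul _ (fun T => (∏ s ∈ T, y s) * H T),
    ← mul_assoc, mul_pow] at h1
  · have hne : (2 ^ n * (n.factorial : R)) ^ 2 ≠ 0 := by
      have : (n.factorial : R) ≠ 0 := by exact_mod_cast n.factorial_ne_zero
      exact pow_ne_zero _ (mul_ne_zero (pow_ne_zero _ two_ne_zero) this)
    exact (mul_left_cancel₀ hne h1).symm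
  · intro f hf
    rw [pairMatrix_det_of_not_injective _ _ _ hf, mul_zero]
  · intro f hf
    rw [hH f hf, Finset.prod_image (fun a _ b _ h => hf h)]

/-! ### Triples and the Laplacian -/

/-- The vertices of a triple, in increasing order. -/
def tri {m : ℕ} (s : {s : Finset (Fin m) // s.card = 3}) (a : Fin 3) : Fin m :=
  s.1.orderEmbOfFin s.2 a

lemma mem_iff_tri {m : ℕ} (s : {s : Finset (Fin m) // s.card = 3}) (v : Fin m) :
    v ∈ s.1 ↔ ∃ a, v = tri s a := by
  have := Finset.range_orderEmbOfFin s.1 s.2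
  rw [← Finset.mem_coe, ← this, Set.mem_range]
  simp only [tri, eq_comm]

lemma tri_lt {m : ℕ} (s : {s : Finset (Fin m) // s.card = 3}) {a b : Fin 3} (h : a < b) :
    tri s a < tri s b :=
  (s.1.orderEmbOfFin s.2).strictMono h

/-- The column of the oriented incidence matrix belonging to the edge from the smallest vertex of
the triple `s` to its `a`-th vertex. -/
def edgeVec {m : ℕ} (a : Fin 3) (s : {s : Finset (Fin m) // s.card = 3}) : Fin m → ℤ :=
  fun v => (if v = tri s a then 1 else 0) - (if v = tri s 0 then 1 else 0)

lemma sum_edgeVec {m : ℕ} (a : Fin 3) (s : {s : Finset (Fin m) // s.card = 3}) :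
    ∑ v, edgeVec a s v = 0 := by
  simp [edgeVec]

/-- For a fixed triple `a < b < c`, the antisymmetric sign of `(i, j, k)` is the determinant of the
`3 × 3` matrix of indicators. -/
lemma sign_eq_indicator {m : ℕ} (a b c i j k : Fin m) (hab : a < b) (hbc : b < c) :
    (if ({i, j, k} : Finset (Fin m)) = {a, b, c} then
      (((j : ℤ) - (i : ℤ)) * ((k : ℤ) - (j : ℤ)) * ((k : ℤ) - (i : ℤ))).sign else 0) =
    (if i = a then 1 else 0) * (if j = b then 1 else 0) * (if k = c then 1 else 0)
    - (if i = a then 1 else 0) * (if j = c then 1 else 0) * (if k = b then 1 else 0)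
    - (if i = b then 1 else 0) * (if j = a then 1 else 0) * (if k = c then 1 else 0)
    + (if i = b then 1 else 0) * (if j = c then 1 else 0) * (if k = a then 1 else 0)
    + (if i = c then 1 else 0) * (if j = a then 1 else 0) * (if k = b then 1 else 0)
    - (if i = c then 1 else 0) * (if j = b then 1 else 0) * (if k = a then (1 : ℤ) else 0) := by
  have hac := hab.trans hbc
  have h1 : ((b : ℤ) - a).sign = 1 := Int.sign_eq_one_of_pos (by omega)
  have h2 : ((c : ℤ) - b).sign = 1 := Int.sign_eq_one_of_pos (by omega)
  have h3 : ((c : ℤ) - a).sign = 1 := Int.sign_eq_one_of_pos (by omega)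
  have hba : ((a : ℤ) - b).sign = -1 := Int.sign_eq_neg_one_of_neg (by omega)
  have hcb : ((b : ℤ) - c).sign = -1 := Int.sign_eq_neg_one_of_neg (by omega)
  have hca : ((a : ℤ) - c).sign = -1 := Int.sign_eq_neg_one_of_neg (by omega)
  by_cases hs : ({i, j, k} : Finset (Fin m)) = {a, b, c}
  · rw [if_pos hs]
    have hi : i = a ∨ i = b ∨ i = c := by
      have h : i ∈ ({i, j, k} : Finset _) := by simp
      rw [hs] at h
      simpa using h
    have hj : j = a ∨ j = b ∨ j = c := by
      have h : j ∈ ({i, j, k} : Finset _) := by simp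
      rw [hs] at h
      simpa using h
    have hk : k = a ∨ k = b ∨ k = c := by
      have h : k ∈ ({i, j, k} : Finset _) := by simp
      rw [hs] at h
      simpa using h
    rcases hi with rfl | rfl | rfl <;> rcases hj with rfl | rfl | rfl <;>
      rcases hk with rfl | rfl | rfl <;>
      simp [hab.ne, hbc.ne, hac.ne, hab.ne', hbc.ne', hac.ne', Int.sign_mul,
        h1, h2, h3, hba, hcb, hca]
  · rw [if_neg hs]
    have key : ∀ x y z : Fin m, ({x, y, z} : Finset (Fin m)) = {a, b, c} →
        (if i = x then 1 else 0) * (if j = y then 1 else 0) * (if k = z then (1 : ℤ) else 0) = 0 := by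
      intro x y z h
      split_ifs with h1 h2 h3
      · subst h1 h2 h3; exact absurd h hs
      all_goals simp
    rw [key a b c rfl, key a c b (by grind), key b a c (by grind), key b c a (by grind),
      key c a b (by grind), key c b a (by grind)]
    simp

lemma triple_eq {m : ℕ} (s : {s : Finset (Fin m) // s.card = 3}) :
    s.1 = {tri s 0, tri s 1, tri s 2} := by
  ext v
  rw [mem_iff_tri]
  simp [Fin.exists_fin_succ]

/-- The hypergraph Laplacian is the sum over triples `a < b < c` of `y_{abc}` times the bivector
`(e_b - e_a) ∧ (e_c - e_a)`. -/
lemma laplacian_eq {m : ℕ} (i j : Fin m) :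
    ∑ k, ytilde m i j k = ∑ s : {s : Finset (Fin m) // s.card = 3},
      MvPolynomial.X s * (Int.cast (edgeVec 1 s i) * Int.cast (edgeVec 2 s j) -
        Int.cast (edgeVec 2 s i) * Int.cast (edgeVec 1 s j)) := by
  have h1 : ∀ k, ytilde m i j k = ∑ s : {s : Finset (Fin m) // s.card = 3},
      MvPolynomial.X s * (((if ({i, j, k} : Finset (Fin m)) = s.1 then
      (((j : ℤ) - (i : ℤ)) * ((k : ℤ) - (j : ℤ)) * ((k : ℤ) - (i : ℤ))).sign else 0) : ℤ) :
        MvPolynomial {s : Finset (Fin m) // s.card = 3} ℤ) := by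
    intro k
    unfold ytilde
    split_ifs with h
    · rw [Finset.sum_eq_single ⟨_, h⟩]
      · rw [if_pos rfl, zsmul_eq_mul, mul_comm]
      · intro s _ hs
        rw [if_neg (fun h' => hs (Subtype.ext h'.symm))]
        simp
      · simp
    · rw [smul_zero, Finset.sum_eq_zero]
      intro s _
      rw [if_neg (fun h' => h (by rw [h']; exact s.2))]
      simp
  simp_rw [h1]
  rw [Finset.sum_comm]
  refine Finset.sum_congr rfl fun s _ => ?_
  rw [← Finset.mul_sum]
  congr 1
  rw [← Int.cast_sum, ← Int.cast_mul, ← Int.cast_mul, ← Int.cast_sub]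
  congr 1
  rw [triple_eq s]
  simp_rw [sign_eq_indicator _ _ _ i j _ (tri_lt s (show (0 : Fin 3) < 1 by decide))
    (tri_lt s (show (1 : Fin 3) < 2 by decide))]
  simp only [Finset.sum_add_distrib, Finset.sum_sub_distrib, ← Finset.mul_sum,
    Finset.sum_ite_eq', Finset.mem_univ, if_true, edgeVec]
  ring

/-! ### Reduced incidence matrices -/

/-- The reduced incidence matrix of the graph with the two edges `a b`, `a c` for each triple
`a < b < c` of the list `f`.  Its rows are indexed through `g`, which in all uses enumerates
the vertices other than one root. -/
def incMatrix {m n : ℕ} (g : Fin 2 × Fin n → Fin m)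
    (f : Fin n → {s : Finset (Fin m) // s.card = 3}) :
    Matrix (Fin 2 × Fin n) (Fin 2 × Fin n) ℤ :=
  pairMatrix (fun s x => edgeVec 1 s (g x)) (fun s x => edgeVec 2 s (g x)) f

/-- The determinant of the reduced incidence matrix of a set `T` of `n` triples (junk value `0`
when `T` does not have `n` elements). -/
noncomputable def treeSign {m n : ℕ} (g : Fin 2 × Fin n → Fin m)
    (T : Finset {s : Finset (Fin m) // s.card = 3}) : ℤ :=
  if h : T.card = n then (incMatrix g fun k => ((T.equivFinOfCardEq h).symm k).1).det else 0

lemma incMatrix_det {m n : ℕ} (g : Fin 2 × Fin n → Fin m)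
    (f : Fin n → {s : Finset (Fin m) // s.card = 3}) (hf : Function.Injective f) :
    (incMatrix g f).det = treeSign g (Finset.univ.image f) := by
  have h : (Finset.univ.image f).card = n := by
    rw [Finset.card_image_of_injective _ hf]; simp
  rw [treeSign, dif_pos h]
  refine pairMatrix_det_congr _ _ hf (fun a b hab => by simpa using hab) ?_
  ext s
  constructor
  · rintro ⟨k, rfl⟩
    exact ⟨(Finset.univ.image f).equivFinOfCardEq h ⟨f k, by simp⟩, by simp⟩
  · rintro ⟨k, rfl⟩
    obtain ⟨l, -, hl⟩ :=
      Finset.mem_image.1 (((Finset.univ.image f).equivFinOfCardEq h).symm k).2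
    exact ⟨l, hl⟩

lemma sum_eq_of_range {m n : ℕ} {g : Fin 2 × Fin n → Fin m} {p : Fin m}
    (hg : Function.Injective g) (hp : ∀ v, v ≠ p ↔ v ∈ Set.range g) (w : Fin m → ℤ) :
    ∑ v, w v = w p + ∑ x, w (g x) := by
  have : Finset.univ.erase p = Finset.univ.image g := by
    ext v
    simpa using hp v
  rw [← Finset.add_sum_erase _ _ (Finset.mem_univ p), this,
    Finset.sum_image (fun a _ b _ h => hg h)]

/-- Changing the root multiplies all reduced determinants by a common factor: since the columns of
the full incidence matrix sum to zero, a fixed matrix turns one reduction into the other. -/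
lemma treeSign_change_root {m n : ℕ} {g g' : Fin 2 × Fin n → Fin m} {p : Fin m}
    (hg : Function.Injective g) (hp : ∀ v, v ≠ p ↔ v ∈ Set.range g) :
    ∃ d : ℤ, ∀ T, treeSign g' T = d * treeSign g T := by
  let U : Matrix (Fin 2 × Fin n) (Fin 2 × Fin n) ℤ :=
    Matrix.of fun x x' => if g' x = g x' then 1 else if g' x = p then -1 else 0
  have hU : ∀ w : Fin m → ℤ, ∑ v, w v = 0 → ∀ x, ∑ x', U x x' * w (g x') = w (g' x) := by
    intro w hw x
    rw [sum_eq_of_range hg hp] at hw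
    by_cases hx : g' x = p
    · have hne : ∀ x', g' x ≠ g x' := fun x' h => (hp (g x')).2 ⟨x', rfl⟩ (h ▸ hx)
      simp only [U, Matrix.of_apply, if_neg (hne _), if_pos hx]
      rw [← Finset.mul_sum, hx]
      linarith
    · obtain ⟨x0, hx0⟩ := (hp _).1 hx
      rw [Finset.sum_eq_single x0]
      · simp [U, hx0]
      · intro b _ hb
        have : g' x ≠ g b := fun h => hb (hg (hx0.trans h)).symm
        simp [U, hx, this]
      · simp
  refine ⟨U.det, fun T => ?_⟩
  unfold treeSign
  split_ifs with h
  · rw [← Matrix.det_mul]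
    congr 1
    ext x y
    rw [Matrix.mul_apply]
    simp only [incMatrix, pairMatrix, Matrix.of_apply]
    split_ifs
    · exact (hU _ (sum_edgeVec _ _) x).symm
    · exact (hU _ (sum_edgeVec _ _) x).symm
  · simp

/-! ### The realization -/

lemma realization_adj_inl_inr {V : Type*} (T : Finset (Finset V)) (v : V) (t : {t // t ∈ T}) :
    (realization T).Adj (Sum.inl v) (Sum.inr t) ↔ v ∈ t.1 := by
  simp [realization, SimpleGraph.fromRel_adj]

lemma realization_not_adj_inl {V : Type*} (T : Finset (Finset V)) (v w : V) :
    ¬ (realization T).Adj (Sum.inl v) (Sum.inl w) := by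
  simp [realization, SimpleGraph.fromRel_adj]

lemma realization_not_adj_inr {V : Type*} (T : Finset (Finset V)) (t s : {t // t ∈ T}) :
    ¬ (realization T).Adj (Sum.inr t) (Sum.inr s) := by
  simp [realization, SimpleGraph.fromRel_adj]

lemma realization_card_edgeSet {V : Type*} [Fintype V] (T : Finset (Finset V))
    (hT : ∀ t ∈ T, t.card = 3) : Nat.card (realization T).edgeSet = 3 * T.card := by
  have hb : (realization T).IsBipartiteWith
      ((Finset.univ.map Function.Embedding.inl : Finset (V ⊕ {t // t ∈ T})) : Set _)
      ((Finset.univ.map Function.Embedding.inr : Finset (V ⊕ {t // t ∈ T})) : Set _) := by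
    constructor
    · rw [Set.disjoint_left]
      rintro (v | t) <;> simp
    · rintro (v | t) (w | s) h
      · exact absurd h (realization_not_adj_inl T v w)
      · simp
      · simp
      · exact absurd h (realization_not_adj_inr T t s)
  have h := SimpleGraph.isBipartiteWith_sum_degrees_eq_card_edges' hb
  rw [Finset.sum_map] at h
  have hdeg : ∀ t : {t // t ∈ T}, (realization T).degree (Function.Embedding.inr t) = 3 := by
    intro t
    rw [← hT t.1 t.2, ← SimpleGraph.card_neighborFinset_eq_degree,
      ← Finset.card_map (Function.Embedding.inl : V ↪ V ⊕ {t // t ∈ T})]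
    congr 1
    ext x
    rw [SimpleGraph.mem_neighborFinset]
    rcases x with v | s
    · rw [SimpleGraph.adj_comm]
      simpa using realization_adj_inl_inr T v t
    · simpa using realization_not_adj_inr T t s
  rw [Finset.sum_congr rfl (fun t _ => hdeg t)] at h
  rw [Nat.card_eq_fintype_card, ← SimpleGraph.edgeFinset_card, ← h]
  simp [mul_comm]

/-- A set of triples on `m` vertices is a spanning tree if and only if its realization is connected
and it has `(m - 1) / 2` elements. -/
lemma realization_isTree_iff {m : ℕ} (T : Finset (Finset (Fin m))) (hT : ∀ t ∈ T, t.card = 3) :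
    (realization T).IsTree ↔ (realization T).Connected ∧ 2 * T.card + 1 = m := by
  rw [SimpleGraph.isTree_iff_connected_and_card, realization_card_edgeSet T hT]
  refine and_congr_right fun _ => ?_
  simp only [Nat.card_eq_fintype_card, Fintype.card_sum, Fintype.card_fin, Fintype.card_coe]
  omega

/-- If the realization is connected, every standard basis vector is an integral combination of the
columns of the reduced incidence matrix, which is therefore unimodular. -/
lemma isUnit_incMatrix_det {m n : ℕ} {g : Fin 2 × Fin n → Fin m} {p : Fin m}
    (hg : Function.Injective g) (hp : ∀ v, v ≠ p ↔ v ∈ Set.range g)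
    (f : Fin n → {s : Finset (Fin m) // s.card = 3}) (T : Finset (Finset (Fin m)))
    (hT : ∀ t, t ∈ T ↔ ∃ k, t = (f k).1) (hconn : (realization T).Connected) :
    IsUnit (incMatrix g f).det := by
  have h3 : ∀ t ∈ T, t.card = 3 := by
    intro t ht
    obtain ⟨k, rfl⟩ := (hT t).1 ht
    exact (f k).2
  -- vectors on the full vertex set whose restriction is a combination of the columns
  let W : Submodule ℤ (Fin m → ℤ) :=
    (LinearMap.range (incMatrix g f).mulVecLin).comap (LinearMap.funLeft ℤ ℤ g)
  have hW : ∀ w, w ∈ W ↔ ∃ c, (incMatrix g f).mulVec c = fun x => w (g x) := by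
    intro w
    simp only [W, Submodule.mem_comap, LinearMap.mem_range, Matrix.mulVecLin_apply]
    rfl
  have hE : ∀ (a : Fin 3) k, edgeVec a (f k) ∈ W := by
    intro a k
    rw [hW]
    fin_cases a
    · exact ⟨0, by rw [Matrix.mulVec_zero]; funext x; simp [edgeVec]⟩
    · refine ⟨Pi.single (0, k) 1, ?_⟩
      rw [Matrix.mulVec_single_one]
      funext x
      simp [incMatrix, pairMatrix, Matrix.col]
    · refine ⟨Pi.single (1, k) 1, ?_⟩
      rw [Matrix.mulVec_single_one]
      funext x
      simp [incMatrix, pairMatrix, Matrix.col]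
  -- a base vertex in `V` for every vertex of the realization
  let r : Fin m ⊕ {t // t ∈ T} → Fin m :=
    Sum.elim id (fun t => tri ⟨t.1, h3 t.1 t.2⟩ 0)
  let δ : Fin m → Fin m → ℤ := fun w v => if v = w then 1 else 0
  have hadj : ∀ v t, (realization T).Adj (Sum.inl v) (Sum.inr t) →
      δ (r (Sum.inl v)) - δ (r (Sum.inr t)) ∈ W := by
    intro v t h
    rw [realization_adj_inl_inr] at h
    obtain ⟨k, hk⟩ := (hT t.1).1 t.2
    obtain ⟨a, ha⟩ := (mem_iff_tri (f k) v).1 (hk ▸ h)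
    have hs : (⟨t.1, h3 t.1 t.2⟩ : {s : Finset (Fin m) // s.card = 3}) = f k := Subtype.ext hk
    have : δ (r (Sum.inl v)) - δ (r (Sum.inr t)) = edgeVec a (f k) := by
      funext x
      simp [δ, r, edgeVec, hs, ha]
    rw [this]
    exact hE a k
  have hreach : ∀ x y, (realization T).Reachable x y → δ (r x) - δ (r y) ∈ W := by
    rintro x y ⟨w⟩
    induction w with
    | nil => rw [sub_self]; exact W.zero_mem
    | @cons x y z h _ ih =>
      rw [← sub_add_sub_cancel (δ (r x)) (δ (r y)) (δ (r z))]
      refine W.add_mem ?_ ih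
      rcases x with v | t <;> rcases y with w | s
      · exact absurd h (realization_not_adj_inl T v w)
      · exact hadj v s h
      · rw [← neg_sub]
        exact W.neg_mem (hadj w t h.symm)
      · exact absurd h (realization_not_adj_inr T t s)
  have hsingle : ∀ x, (Pi.single x 1 : Fin 2 × Fin n → ℤ) ∈
      LinearMap.range (incMatrix g f).mulVecLin := by
    intro x
    obtain ⟨c, hc⟩ := (hW _).1 (hreach (Sum.inl (g x)) (Sum.inl p) (hconn.preconnected _ _))
    refine ⟨c, ?_⟩
    rw [Matrix.mulVecLin_apply, hc]
    funext x'
    have : g x' ≠ p := (hp _).2 ⟨x', rfl⟩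
    simp [δ, r, this, Pi.single_apply, hg.eq_iff]
  have hsurj : Function.Surjective (incMatrix g f).mulVec := by
    intro w
    have hw : w ∈ LinearMap.range (incMatrix g f).mulVecLin := by
      rw [pi_eq_sum_univ' w]
      refine Submodule.sum_mem _ fun x _ => Submodule.smul_mem _ _ ?_
      convert hsingle x using 1
    exact hw
  obtain ⟨B, hB⟩ := Matrix.mulVec_surjective_iff_exists_right_inverse.1 hsurj
  exact IsUnit.of_mul_eq_one B.det (by rw [← Matrix.det_mul, hB, Matrix.det_one])

/-- If the realization is disconnected, the indicator of a component avoiding the root is a nonzero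
left null vector of the reduced incidence matrix. -/
lemma incMatrix_det_eq_zero {m n : ℕ} {g : Fin 2 × Fin n → Fin m} {p : Fin m}
    (hp : ∀ v, v ≠ p ↔ v ∈ Set.range g)
    (hsum : ∀ w : Fin m → ℤ, ∑ v, w v = w p + ∑ x, w (g x))
    (f : Fin n → {s : Finset (Fin m) // s.card = 3}) (T : Finset (Finset (Fin m)))
    (hT : ∀ t, t ∈ T ↔ ∃ k, t = (f k).1) (hconn : ¬ (realization T).Connected) :
    (incMatrix g f).det = 0 := by
  have hmem : ∀ k a, (realization T).Adj (Sum.inl (tri (f k) a))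
      (Sum.inr ⟨(f k).1, (hT _).2 ⟨k, rfl⟩⟩) := by
    intro k a
    rw [realization_adj_inl_inr]
    exact (mem_iff_tri _ _).2 ⟨a, rfl⟩
  obtain ⟨z, hz⟩ : ∃ z, ¬ (realization T).Reachable (Sum.inl p) z := by
    by_contra! h
    exact hconn ((SimpleGraph.connected_iff_exists_forall_reachable _).2 ⟨_, h⟩)
  obtain ⟨v, hv⟩ : ∃ v, (realization T).Reachable (Sum.inl v) z := by
    rcases z with v | ⟨t, ht⟩
    · exact ⟨v, SimpleGraph.Reachable.refl _⟩
    · obtain ⟨k, rfl⟩ := (hT t).1 ht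
      exact ⟨_, (hmem k 0).reachable⟩
  have hvp : v ≠ p := by rintro rfl; exact hz hv
  let c : Fin m → ℤ := fun v => if (realization T).Reachable (Sum.inl v) z then 1 else 0
  have hcp : c p = 0 := if_neg hz
  have hct : ∀ k a, c (tri (f k) a) = c (tri (f k) 0) := by
    intro k a
    have h := (hmem k a).reachable.trans (hmem k 0).reachable.symm
    simp only [c]
    congr 1
    exact propext ⟨fun h' => h.symm.trans h', fun h' => h.trans h'⟩
  have hdot : ∀ k a, ∑ x, c (g x) * edgeVec a (f k) (g x) = 0 := by
    intro k a
    have h := hsum (fun v => c v * edgeVec a (f k) v)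
    rw [hcp, zero_mul, zero_add] at h
    rw [← h]
    simp [edgeVec, mul_sub, hct k a]
  rw [← Matrix.exists_vecMul_eq_zero_iff]
  refine ⟨fun x => c (g x), ?_, ?_⟩
  · obtain ⟨x, rfl⟩ := (hp v).1 hvp
    intro h
    have := congrFun h x
    simp [c, hv] at this
  · funext y
    simp only [Matrix.vecMul, dotProduct, incMatrix, pairMatrix, Matrix.of_apply, Pi.zero_apply]
    split_ifs
    · exact hdot _ _
    · exact hdot _ _

/-! ### The theorem -/

/-- On sets of `n` triples, `treeSign` is `±1` at the spanning trees and `0` at all others. -/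
lemma treeSign_spec {m n : ℕ} {g : Fin 2 × Fin n → Fin m} {p : Fin m}
    (hg : Function.Injective g) (hp : ∀ v, v ≠ p ↔ v ∈ Set.range g) (hm : m = 2 * n + 1)
    (T : Finset {s : Finset (Fin m) // s.card = 3}) (hT : T.card = n) :
    ((realization (T.map (Function.Embedding.subtype _))).IsTree →
      treeSign g T = 1 ∨ treeSign g T = -1) ∧
    (¬ (realization (T.map (Function.Embedding.subtype _))).IsTree → treeSign g T = 0) := by
  have h3 : ∀ t ∈ T.map (Function.Embedding.subtype _), t.card = 3 := by
    intro t ht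
    obtain ⟨s, -, rfl⟩ := Finset.mem_map.1 ht
    exact s.2
  have htree := realization_isTree_iff _ h3
  rw [Finset.card_map] at htree
  have hmem : ∀ t, t ∈ T.map (Function.Embedding.subtype _) ↔
      ∃ k, t = ((T.equivFinOfCardEq hT).symm k).1.1 := by
    intro t
    rw [Finset.mem_map]
    constructor
    · rintro ⟨s, hs, rfl⟩
      exact ⟨T.equivFinOfCardEq hT ⟨s, hs⟩, by simp⟩
    · rintro ⟨k, rfl⟩
      exact ⟨_, ((T.equivFinOfCardEq hT).symm k).2, rfl⟩
  rw [treeSign, dif_pos hT]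
  constructor
  · intro h
    exact Int.isUnit_iff.1 (isUnit_incMatrix_det hg hp _ _ hmem (htree.1 h).1)
  · intro h
    refine incMatrix_det_eq_zero hp (sum_eq_of_range hg hp) _ _ hmem fun hc => h ?_
    exact htree.2 ⟨hc, by omega⟩

/-- The signed generating function of the spanning trees, as a sum over `n`-subsets of the set of
triples. -/
lemma sum_trees_eq {m n : ℕ} {g : Fin 2 × Fin n → Fin m} {p : Fin m}
    (hg : Function.Injective g) (hp : ∀ v, v ≠ p ↔ v ∈ Set.range g) (hm : m = 2 * n + 1) :
    (∑ T ∈ Finset.univ.filter (fun T : Finset (Finset (Fin m)) =>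
        (∀ t ∈ T, t.card = 3) ∧ (realization T).IsTree),
      ((treeSign g (T.subtype fun s => s.card = 3) : ℤ) :
        MvPolynomial {s : Finset (Fin m) // s.card = 3} ℤ) *
        ∏ s : {s : Finset (Fin m) // s.card = 3},
          if s.1 ∈ T then MvPolynomial.X s else 1) =
      ∑ T ∈ (Finset.univ : Finset {s : Finset (Fin m) // s.card = 3}).powersetCard n,
        (∏ s ∈ T, MvPolynomial.X s) * Int.cast (treeSign g T) := by
  symm
  rw [← Finset.sum_filter_of_ne (p := fun T : Finset {s : Finset (Fin m) // s.card = 3} =>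
    (realization (T.map (Function.Embedding.subtype _))).IsTree)]
  · refine Finset.sum_bij' (fun T _ => T.map (Function.Embedding.subtype _))
      (fun T _ => T.subtype fun s => s.card = 3) ?_ ?_ ?_ ?_ ?_
    · intro T hT
      rw [Finset.mem_filter] at hT ⊢
      refine ⟨Finset.mem_univ _, ?_, hT.2⟩
      intro t ht
      obtain ⟨s, -, rfl⟩ := Finset.mem_map.1 ht
      exact s.2
    · intro T hT
      rw [Finset.mem_filter] at hT ⊢
      have h := Finset.subtype_map_of_mem hT.2.1
      rw [Finset.mem_powersetCard_univ, h]
      refine ⟨?_, hT.2.2⟩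
      have hc := ((realization_isTree_iff T hT.2.1).1 hT.2.2).2
      rw [← h, Finset.card_map] at hc
      omega
    · intro T _
      ext s
      simpa using fun _ => s.2
    · intro T hT
      exact Finset.subtype_map_of_mem (Finset.mem_filter.1 hT).2.1
    · intro T _
      have h : (T.map (Function.Embedding.subtype _)).subtype (fun s => s.card = 3) = T := by
        ext s
        simpa using fun _ => s.2
      rw [h, mul_comm]
      congr 1
      rw [Finset.prod_ite, Finset.prod_const_one, mul_one]
      refine Finset.prod_congr ?_ fun _ _ => rfl
      ext s
      simpa using fun _ => s.2
  · intro T hT h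
    by_contra h'
    rw [Finset.mem_powersetCard_univ] at hT
    rw [(treeSign_spec hg hp hm T hT).2 h'] at h
    simp at h

/-- The determinant of the Laplacian reduced at `p` is a square, with the signs still depending
on `p`. -/
lemma det_eq_sq_of_equiv {m n : ℕ} {p : Fin m} (e : Fin 2 × Fin n ≃ {v : Fin m // v ≠ p}) :
    (Matrix.det (fun i j : {v : Fin m // v ≠ p} => ∑ k : Fin m, ytilde m (i : Fin m) (j : Fin m) k))
      = (∑ T ∈ (Finset.univ : Finset {s : Finset (Fin m) // s.card = 3}).powersetCard n,
        (∏ s ∈ T, MvPolynomial.X s) * Int.cast (treeSign (fun x => (e x).1) T)) ^ 2 := by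
  rw [← det_bivector_eq_sq (fun s => MvPolynomial.X s)
    (fun s x => Int.cast (edgeVec 1 s (e x).1)) (fun s x => Int.cast (edgeVec 2 s (e x).1))
    (fun T => Int.cast (treeSign (fun x => (e x).1) T))]
  · refine (Matrix.det_submatrix_equiv_self e _).symm.trans ?_
    congr 1
    ext1 i j
    exact laplacian_eq _ _
  · intro f hf
    trans Int.castRingHom _ (incMatrix (fun x => (e x).1) f).det
    swap
    · rw [incMatrix_det _ _ hf]
      congr!
    rw [RingHom.map_det]
    congr 1
    ext1 i x
    simp only [pairMatrix, incMatrix, Matrix.of_apply, RingHom.mapMatrix_apply, Matrix.map_apply]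
    split_ifs <;> rfl

/-- A skew-symmetric matrix of odd size over a domain of characteristic zero has
determinant zero. -/
lemma det_eq_zero_of_odd {R N : Type*} [CommRing R] [IsDomain R] [CharZero R] [Fintype N]
    [DecidableEq N] (A : N → N → R) (hA : ∀ i j, A i j = -A j i) (hN : Odd (Fintype.card N)) :
    Matrix.det A = 0 := by
  have h := Matrix.det_transpose (Matrix.of A)
  have hA' : (Matrix.of A).transpose = -Matrix.of A := by
    ext1 i j
    exact hA j i
  rw [hA', Matrix.det_neg, hN.neg_one_pow, neg_one_mul] at h
  exact self_eq_neg.1 h.symm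

lemma laplacian_antisymm {m : ℕ} (i j : Fin m) :
    ∑ k, ytilde m i j k = -∑ k, ytilde m j i k := by
  rw [laplacian_eq, laplacian_eq, ← Finset.sum_neg_distrib]
  exact Finset.sum_congr rfl fun s _ => by ring

/-- the (squared) Pfaffian Matrix-Tree Theorem for the complete
3-graph `Γ_m`.  Let `Λ(Γ_m)` be the `m × m` skew-symmetric matrix over
`R = ℤ[y_s]` with `(i,j)` entry `∑_k ỹ_{ijk}`.  Then there is an assignment of
a sign `ε(T) ∈ {1, -1}` to each spanning tree `T` of `Γ_m` such that for every
`p`, the determinant of `Λ(Γ_m)` with the `p`-th row and column deleted equals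
the square of the signed spanning-tree generating function
`∑_T ε(T) ∏_{{i,j,k} ∈ T} y_{ijk}`. -/
theorem pfaffian_matrix_tree_theorem_squared (m : ℕ) (hm : 1 ≤ m) :
    ∃ ε : Finset (Finset (Fin m)) → ℤ,
      (∀ T : Finset (Finset (Fin m)),
        ((∀ t ∈ T, t.card = 3) ∧ (realization T).IsTree) →
          (ε T = 1 ∨ ε T = -1)) ∧
      ∀ p : Fin m,
        (Matrix.det (fun i j : {v : Fin m // v ≠ p} =>
            ∑ k : Fin m, ytilde m (i : Fin m) (j : Fin m) k))
          = (∑ T ∈ Finset.univ.filter (fun T : Finset (Finset (Fin m)) =>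
                (∀ t ∈ T, t.card = 3) ∧ (realization T).IsTree),
              (ε T : MvPolynomial {s : Finset (Fin m) // s.card = 3} ℤ) *
                ∏ s : {s : Finset (Fin m) // s.card = 3},
                  if s.1 ∈ T then MvPolynomial.X s else 1) ^ 2 := by
  have hcard : ∀ p : Fin m, Fintype.card {v : Fin m // v ≠ p} = m - 1 := by
    intro p
    rw [Fintype.card_subtype_compl, Fintype.card_subtype_eq, Fintype.card_fin]
  rcases Nat.even_or_odd' m with ⟨n, hn | hn⟩
  · -- for even `m` there are no spanning trees and all the determinants have odd size
    refine ⟨fun _ => 1, fun _ _ => Or.inl rfl, fun p => ?_⟩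
    refine (det_eq_zero_of_odd _ (fun i j => laplacian_antisymm _ _) ?_).trans ?_
    · rw [hcard]
      exact ⟨n - 1, by omega⟩
    · rw [Finset.sum_eq_zero, zero_pow two_ne_zero]
      intro T hT
      rw [Finset.mem_filter] at hT
      have := ((realization_isTree_iff T hT.2.1).1 hT.2.2).2
      omega
  · have e : ∀ p : Fin m, Fin 2 × Fin n ≃ {v : Fin m // v ≠ p} := fun p =>
      Fintype.equivOfCardEq (by rw [hcard, Fintype.card_prod, Fintype.card_fin, Fintype.card_fin]
                                omega)
    have hg : ∀ p, Function.Injective fun x => (e p x).1 := fun p =>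
      Subtype.val_injective.comp (e p).injective
    have hp : ∀ p v, v ≠ p ↔ v ∈ Set.range fun x => (e p x).1 := by
      intro p v
      constructor
      · intro h
        exact ⟨(e p).symm ⟨v, h⟩, by simp⟩
      · rintro ⟨x, rfl⟩
        exact (e p x).2
    -- the signs are read off at a fixed root
    let p₀ : Fin m := ⟨0, by omega⟩
    refine ⟨fun T => treeSign (fun x => (e p₀ x).1) (T.subtype fun s => s.card = 3), ?_, ?_⟩
    · rintro T ⟨h3, htree⟩
      have h := Finset.subtype_map_of_mem h3
      refine (treeSign_spec (hg p₀) (hp p₀) hn _ ?_).1 (by rw [h]; exact htree)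
      have hc := ((realization_isTree_iff T h3).1 htree).2
      rw [← h, Finset.card_map] at hc
      omega
    · intro p
      rw [sum_trees_eq (hg p₀) (hp p₀) hn, det_eq_sq_of_equiv (e p)]
      obtain ⟨d, hd⟩ := treeSign_change_root (g' := fun x => (e p x).1) (hg p₀) (hp p₀)
      by_cases hex : ∃ T : Finset {s : Finset (Fin m) // s.card = 3}, T.card = n ∧
          (realization (T.map (Function.Embedding.subtype _))).IsTree
      · -- the change-of-root factor is a unit, since it compares two units at a spanning tree
        obtain ⟨T, hT, htree⟩ := hex
        have h1 := (treeSign_spec (hg p₀) (hp p₀) hn T hT).1 htree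
        have h2 := (treeSign_spec (hg p) (hp p) hn T hT).1 htree
        have hd2 : d ^ 2 = 1 := by
          have h := hd T
          rcases h1 with h1 | h1 <;> rcases h2 with h2 | h2 <;> rw [h1, h2] at h <;> nlinarith
        simp_rw [hd, Int.cast_mul, mul_left_comm _ (Int.cast d)]
        rw [← Finset.mul_sum, mul_pow, ← Int.cast_pow, hd2, Int.cast_one, one_mul]
      · push Not at hex
        refine congrArg (· ^ 2) (Finset.sum_congr rfl fun T hT => ?_)
        rw [Finset.mem_powersetCard_univ] at hT
        rw [hd, (treeSign_spec (hg p₀) (hp p₀) hn T hT).2 (hex T hT), mul_zero]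
end
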